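/- Let u : V → ℝ be an eigenfunction of Δ for the largest eigenvalue λ_{N−1}. If the eigenfunction is sufficiently localized, namely ∑_{i : u(i) ≠ 0} d_i ≤ ∑_{i : u(i) = 0} d_i, then λ_{N−1} ≤ 1 + √(1 − h²). -/

import Mathlib

open Finset

noncomputable section

namespace BJ

variable {V : Type*} [Fintype V] [DecidableEq V]

/-- The degree `d_i = ∑_j w_ij` of a vertex. -/
def deg (w : V → V → ℝ) (i : V) : ℝ := ∑ j, w i j

/-- The volume `vol(A) = ∑_{i ∈ A} d_i` of a vertex subset. -/
def vol (w : V → V → ℝ) (A : Finset V) : ℝ := ∑ i ∈ A, deg w i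

/-- The total edge weight `|E(A,B)| = ∑_{i ∈ A, j ∈ B} w_ij` between two vertex subsets. -/
def eW (w : V → V → ℝ) (A B : Finset V) : ℝ := ∑ i ∈ A, ∑ j ∈ B, w i j

/-- The normalized graph Laplacian `(Δu)(i) = u(i) - (1/d_i) ∑_j w_ij u(j)`. -/
def lap (w : V → V → ℝ) (u : V → ℝ) (i : V) : ℝ :=
  u i - (1 / deg w i) * ∑ j, w i j * u j

/-- `lam` is an eigenvalue of the normalized graph Laplacian. -/
def IsEigen (w : V → V → ℝ) (lam : ℝ) : Prop :=
  ∃ u : V → ℝ, u ≠ 0 ∧ ∀ i, lap w u i = lam * u i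

/-- The weighted graph is connected: any two vertices are joined by a chain of
positive-weight edges. -/
def Conn (w : V → V → ℝ) : Prop :=
  ∀ i j : V, Relation.ReflTransGen (fun a b => 0 < w a b) i j

/-- The weighted graph is bipartite: the vertex set splits into two nonempty classes with
no edges inside a class. -/
def Bipartite (w : V → V → ℝ) : Prop :=
  ∃ A : Finset V, A.Nonempty ∧ Aᶜ.Nonempty ∧
    (∀ i ∈ A, ∀ j ∈ A, w i j = 0) ∧ (∀ i ∈ Aᶜ, ∀ j ∈ Aᶜ, w i j = 0)

/-- The Cheeger constant
`h = min { |E(U,Uᶜ)| / vol(U) : ∅ ≠ U ⊊ V, vol(U) ≤ vol(V)/2 }`. -/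
def cheeger (w : V → V → ℝ) : ℝ :=
  sInf { r : ℝ | ∃ U : Finset V, U.Nonempty ∧ U ≠ Finset.univ ∧
    vol w U ≤ vol w Finset.univ / 2 ∧ r = eW w U Uᶜ / vol w U }

/-- The dual Cheeger constant
`h̄ = max { 2|E(V₁,V₂)| / (vol(V₁)+vol(V₂)) }` over pairs of disjoint nonempty vertex sets
`V₁, V₂` (the third class `V₃` of the partition being the complement of `V₁ ∪ V₂`). -/
def dualCheeger (w : V → V → ℝ) : ℝ :=
  sSup { r : ℝ | ∃ V1 V2 : Finset V, V1.Nonempty ∧ V2.Nonempty ∧ Disjoint V1 V2 ∧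
    r = 2 * eW w V1 V2 / (vol w V1 + vol w V2) }

/-- The weights of the neighborhood graph `Γ[l]`:
`w_ij[l] = ∑_{k₁,…,k_{l-1}} w_{i k₁} w_{k₁ k₂} ⋯ w_{k_{l-1} j} / (d_{k₁} ⋯ d_{k_{l-1}})`,
defined recursively (as a matrix, `wl w l = D ⬝ P^l`; in particular `wl w 1 = w`). -/
def wl (w : V → V → ℝ) : ℕ → V → V → ℝ
  | 0 => fun i j => if i = j then deg w i else 0
  | n + 1 => fun i j => ∑ k, wl w n i k * w k j / deg w k

/-!
Let `S = ∑ d_i u_i²` and `T = ∑ w_ij u_i u_j`. If at most half of the volume carries `u`, then every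
superlevel set of `u²` competes in the definition of `h`, so peeling off these sets one at a time
gives `2 h S ≤ ∑ w_ij |u_i² - u_j²|`. Factoring `u_i² - u_j² = (u_i - u_j)(u_i + u_j)`, the
Cauchy–Schwarz inequality bounds the square of the right-hand side by `(2S - 2T)(2S + 2T)`, hence
`h² S² + T² ≤ S²`. For an eigenfunction `T = (1 - λ) S`, and therefore `(λ - 1)² ≤ 1 - h²`.
-/

/-- The total variation `∑_{i,j} w_ij |f(i) - f(j)|` of a function on the vertices, which turns the
isoperimetric inequality behind the Cheeger constant into a functional one. The sum runs over
ordered pairs, so every edge is counted twice. -/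
def totalVariation (w : V → V → ℝ) (f : V → ℝ) : ℝ := ∑ i, ∑ j, w i j * |f i - f j|

/-- The squared norm `∑_i d_i u(i)²` of `ℓ²(V, d)`, in which the normalized Laplacian is
self-adjoint. -/
def degNormSq (w : V → V → ℝ) (u : V → ℝ) : ℝ := ∑ i, deg w i * u i ^ 2

/-- The quadratic form `∑_{i,j} w_ij u(i) u(j)` of the weighted adjacency matrix, in terms of which
the Rayleigh quotient of the normalized Laplacian is `1 - adjForm w u / degNormSq w u`. -/
def adjForm (w : V → V → ℝ) (u : V → ℝ) : ℝ := ∑ i, ∑ j, w i j * (u i * u j)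

section Forms

omit [DecidableEq V]

variable {w : V → V → ℝ}

lemma degNormSq_pos (hdeg : ∀ i, 0 < deg w i) {u : V → ℝ} (hu : u ≠ 0) : 0 < degNormSq w u := by
  obtain ⟨a, ha⟩ := Function.ne_iff.1 hu
  exact sum_pos' (fun i _ => mul_nonneg (hdeg i).le (sq_nonneg _))
    ⟨a, mem_univ a, mul_pos (hdeg a) (sq_pos_of_ne_zero ha)⟩

lemma sum_deg_mul_mul_lap (hdeg : ∀ i, deg w i ≠ 0) (u : V → ℝ) :
    ∑ i, deg w i * (u i * lap w u i) = degNormSq w u - adjForm w u := by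
  rw [degNormSq, adjForm, ← sum_sub_distrib]
  refine sum_congr rfl fun i _ => ?_
  have hrow : ∑ j, w i j * (u i * u j) = u i * ∑ j, w i j * u j := by
    rw [mul_sum]
    exact sum_congr rfl fun j _ => mul_left_comm _ _ _
  rw [hrow, lap]
  field_simp [hdeg i]

lemma adjForm_eq_of_lap_eq (hdeg : ∀ i, deg w i ≠ 0) {lam : ℝ} {u : V → ℝ}
    (heig : ∀ i, lap w u i = lam * u i) : adjForm w u = (1 - lam) * degNormSq w u := by
  have hform : ∑ i, deg w i * (u i * lap w u i) = lam * degNormSq w u := by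
    rw [degNormSq, mul_sum]
    exact sum_congr rfl fun i _ => by rw [heig]; ring
  linarith [sum_deg_mul_mul_lap hdeg u]

lemma sum_sum_mul_add_mul_sq (hsym : ∀ i j, w i j = w j i) (u : V → ℝ) (c : ℝ) :
    ∑ i, ∑ j, w i j * (u i + c * u j) ^ 2
      = (1 + c ^ 2) * degNormSq w u + 2 * c * adjForm w u := by
  have hleft : ∑ i, ∑ j, w i j * u i ^ 2 = degNormSq w u := by
    simp only [degNormSq, deg, sum_mul]
  have hright : ∑ i, ∑ j, w i j * u j ^ 2 = degNormSq w u := by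
    rw [← hleft, sum_comm]
    simp only [hsym]
  calc ∑ i, ∑ j, w i j * (u i + c * u j) ^ 2
      = ∑ i, ∑ j, w i j * u i ^ 2 + c ^ 2 * ∑ i, ∑ j, w i j * u j ^ 2
          + 2 * c * ∑ i, ∑ j, w i j * (u i * u j) := by
        simp only [mul_sum, ← sum_add_distrib]
        exact sum_congr rfl fun i _ => sum_congr rfl fun j _ => by ring
    _ = (1 + c ^ 2) * degNormSq w u + 2 * c * adjForm w u := by
        rw [hleft, hright, adjForm]
        ring

lemma totalVariation_sq_sq_le (hsym : ∀ i j, w i j = w j i) (hnn : ∀ i j, 0 ≤ w i j)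
    (u : V → ℝ) :
    totalVariation w (u ^ 2) ^ 2 ≤ 4 * (degNormSq w u ^ 2 - adjForm w u ^ 2) := by
  have cauchy_schwarz : totalVariation w (u ^ 2) ^ 2 ≤
      (∑ i, ∑ j, w i j * (u i + -1 * u j) ^ 2) * ∑ i, ∑ j, w i j * (u i + 1 * u j) ^ 2 := by
    simp only [totalVariation, ← Fintype.sum_prod_type']
    refine sum_sq_le_sum_mul_sum_of_sq_le_mul _
      (fun p _ => mul_nonneg (hnn _ _) (sq_nonneg _))
      (fun p _ => mul_nonneg (hnn _ _) (sq_nonneg _)) fun p _ => le_of_eq ?_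
    rw [mul_pow, sq_abs, Pi.pow_apply, Pi.pow_apply]
    ring
  rw [sum_sum_mul_add_mul_sq hsym, sum_sum_mul_add_mul_sq hsym] at cauchy_schwarz
  linarith

end Forms

section Coarea

variable {w : V → V → ℝ}

lemma totalVariation_indicator (hsym : ∀ i j, w i j = w j i) (U : Finset V) :
    totalVariation w (fun i => if i ∈ U then 1 else 0) = 2 * eW w U Uᶜ := by
  have eW_eq_sum_ite (A B : Finset V) :
      eW w A B = ∑ i, ∑ j, if i ∈ A ∧ j ∈ B then w i j else 0 := by
    simp [eW, ite_and]
  have eW_swap : eW w Uᶜ U = eW w U Uᶜ := by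
    rw [eW, eW, sum_comm]
    simp only [hsym]
  rw [two_mul]
  nth_rewrite 2 [← eW_swap]
  simp only [eW_eq_sum_ite, totalVariation, ← sum_add_distrib]
  refine sum_congr rfl fun i _ => sum_congr rfl fun j _ => ?_
  by_cases hi : i ∈ U <;> by_cases hj : j ∈ U <;> simp [hi, hj]

lemma totalVariation_eq_add_mul_indicator {f : V → ℝ} {U : Finset V} {c : ℝ} (hc : 0 ≤ c)
    (hcU : ∀ i ∈ U, c ≤ f i) (hfU : ∀ i ∉ U, f i = 0) :
    totalVariation w f = totalVariation w (fun i => f i - c * if i ∈ U then 1 else 0)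
      + c * totalVariation w (fun i => if i ∈ U then 1 else 0) := by
  simp only [totalVariation, mul_sum, ← sum_add_distrib]
  refine sum_congr rfl fun i _ => sum_congr rfl fun j _ => ?_
  by_cases hi : i ∈ U <;> by_cases hj : j ∈ U
  · simp [hi, hj]
  · have hci := hcU i hi
    simp only [hi, hj, hfU j hj, if_true, if_false, mul_one, mul_zero, sub_zero, abs_one,
      abs_of_nonneg (hc.trans hci), abs_of_nonneg (sub_nonneg.2 hci)]
    ring
  · have hcj := hcU j hj
    simp only [hi, hj, hfU i hi, if_true, if_false, mul_one, mul_zero, zero_sub, sub_zero, abs_neg,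
      abs_one, abs_of_nonneg (hc.trans hcj), abs_of_nonneg (sub_nonneg.2 hcj)]
    ring
  · simp [hi, hj]

/-- Subtracting `(min_U f) · 1_U` from `f` peels off one superlevel set and leaves a function
supported on a smaller set. -/
lemma two_mul_sum_mul_le_totalVariation (hsym : ∀ i j, w i j = w j i) {μ : V → ℝ} (U : Finset V)
    (hμ : ∀ A ⊆ U, ∑ i ∈ A, μ i ≤ eW w A Aᶜ) {f : V → ℝ} (hf : ∀ i, 0 ≤ f i)
    (hfU : ∀ i ∉ U, f i = 0) : 2 * ∑ i, μ i * f i ≤ totalVariation w f := by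
  induction U using Finset.strongInduction generalizing f with
  | H U ih =>
  rcases U.eq_empty_or_nonempty with rfl | hU
  · have hf0 : ∀ i, f i = 0 := fun i => hfU i (notMem_empty i)
    simp [hf0, totalVariation]
  obtain ⟨a, ha, hmin⟩ := exists_min_image U f hU
  have hrest : 2 * ∑ i, μ i * (f i - f a * if i ∈ U then 1 else 0)
      ≤ totalVariation w (fun i => f i - f a * if i ∈ U then 1 else 0) := by
    refine ih (U.erase a) (erase_ssubset ha) (fun A hA => hμ A (hA.trans (erase_subset a U)))
      (fun i => ?_) fun i hi => ?_
    · by_cases hi : i ∈ U <;> simp [hi, hmin, hf]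
    · rcases eq_or_ne i a with rfl | hia
      · simp [ha]
      · have hiU : i ∉ U := fun h => hi (mem_erase.2 ⟨hia, h⟩)
        simp [hiU, hfU]
  have hsplit : ∑ i, μ i * (f i - f a * if i ∈ U then 1 else 0)
      = ∑ i, μ i * f i - f a * ∑ i ∈ U, μ i := by
    simp [mul_sub, sum_sub_distrib, mul_sum, mul_comm]
  have hlayer := mul_le_mul_of_nonneg_left (hμ U Subset.rfl) (hf a)
  rw [totalVariation_eq_add_mul_indicator (hf a) hmin hfU, totalVariation_indicator hsym]
  linarith

end Coarea

section Cheeger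

variable {w : V → V → ℝ}

omit [DecidableEq V] in
lemma vol_nonneg (hnn : ∀ i j, 0 ≤ w i j) (A : Finset V) : 0 ≤ vol w A :=
  sum_nonneg fun i _ => sum_nonneg fun j _ => hnn i j

lemma eW_compl_div_vol_nonneg (hnn : ∀ i j, 0 ≤ w i j) (U : Finset V) :
    0 ≤ eW w U Uᶜ / vol w U :=
  div_nonneg (sum_nonneg fun i _ => sum_nonneg fun j _ => hnn i j) (vol_nonneg hnn U)

lemma cheeger_nonneg (hnn : ∀ i j, 0 ≤ w i j) : 0 ≤ cheeger w := by
  refine Real.sInf_nonneg ?_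
  rintro _ ⟨U, -, -, -, rfl⟩
  exact eW_compl_div_vol_nonneg hnn U

lemma cheeger_mul_vol_le (hnn : ∀ i j, 0 ≤ w i j) (hdeg : ∀ i, 0 < deg w i) {U : Finset V}
    (hvol : vol w U ≤ vol w univ / 2) : cheeger w * vol w U ≤ eW w U Uᶜ := by
  rcases U.eq_empty_or_nonempty with rfl | hU
  · simp [vol, eW]
  have hpos : 0 < vol w U := sum_pos (fun i _ => hdeg i) hU
  have hne : U ≠ univ := by
    rintro rfl
    linarith
  rw [← le_div_iff₀ hpos]
  refine csInf_le ⟨0, ?_⟩ ⟨U, hU, hne, hvol, rfl⟩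
  rintro _ ⟨W, -, -, -, rfl⟩
  exact eW_compl_div_vol_nonneg hnn W

lemma two_mul_cheeger_mul_sum_le_totalVariation (hsym : ∀ i j, w i j = w j i)
    (hnn : ∀ i j, 0 ≤ w i j) (hdeg : ∀ i, 0 < deg w i) {U : Finset V}
    (hvol : vol w U ≤ vol w univ / 2) {f : V → ℝ} (hf : ∀ i, 0 ≤ f i)
    (hfU : ∀ i ∉ U, f i = 0) :
    2 * (cheeger w * ∑ i, deg w i * f i) ≤ totalVariation w f := by
  have hcut : ∀ A ⊆ U, ∑ i ∈ A, cheeger w * deg w i ≤ eW w A Aᶜ := fun A hA => by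
    have hA_vol : vol w A ≤ vol w U := sum_le_sum_of_subset_of_nonneg hA fun i _ _ => (hdeg i).le
    rw [← mul_sum]
    exact cheeger_mul_vol_le hnn hdeg (hA_vol.trans hvol)
  simpa only [mul_sum, mul_assoc] using two_mul_sum_mul_le_totalVariation hsym U hcut hf hfU

lemma sq_cheeger_mul_degNormSq_add_sq_adjForm_le (hsym : ∀ i j, w i j = w j i)
    (hnn : ∀ i j, 0 ≤ w i j) (hdeg : ∀ i, 0 < deg w i) {u : V → ℝ}
    (hvol : vol w {i | u i ≠ 0} ≤ vol w univ / 2) :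
    (cheeger w * degNormSq w u) ^ 2 + adjForm w u ^ 2 ≤ degNormSq w u ^ 2 := by
  have hcoarea : 2 * (cheeger w * degNormSq w u) ≤ totalVariation w (u ^ 2) :=
    two_mul_cheeger_mul_sum_le_totalVariation hsym hnn hdeg hvol (fun i => sq_nonneg (u i))
      fun i hi => by simpa using hi
  have hnorm : 0 ≤ degNormSq w u := sum_nonneg fun i _ => mul_nonneg (hdeg i).le (sq_nonneg _)
  have hlhs : 0 ≤ 2 * (cheeger w * degNormSq w u) :=
    mul_nonneg two_pos.le (mul_nonneg (cheeger_nonneg hnn) hnorm)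
  have hsq := (pow_le_pow_left₀ hlhs hcoarea 2).trans (totalVariation_sq_sq_le hsym hnn u)
  linarith

end Cheeger

theorem largest_eigenvalue_le_of_localized_eigenfunction_general {w : V → V → ℝ}
    (hsym : ∀ i j, w i j = w j i) (hnn : ∀ i j, 0 ≤ w i j) (hdeg : ∀ i, 0 < deg w i)
    {lam : ℝ} {u : V → ℝ} (hu : u ≠ 0) (heig : ∀ i, lap w u i = lam * u i)
    (hloc : vol w {i | u i ≠ 0} ≤ vol w {i | u i = 0}) :
    |lam - 1| ≤ √(1 - cheeger w ^ 2) := by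
  have hvol : vol w {i | u i ≠ 0} ≤ vol w univ / 2 := by
    have hsplit : vol w {i | u i = 0} + vol w {i | u i ≠ 0} = vol w univ :=
      sum_filter_add_sum_filter_not univ (fun i => u i = 0) (deg w)
    linarith
  have hforms := sq_cheeger_mul_degNormSq_add_sq_adjForm_le hsym hnn hdeg hvol
  rw [adjForm_eq_of_lap_eq (fun i => (hdeg i).ne') heig] at hforms
  refine Real.abs_le_sqrt (le_of_mul_le_mul_right ?_ (pow_pos (degNormSq_pos hdeg hu) 2))
  linarith

/-- Corollary: localized top eigenfunction.
If `u` is an eigenfunction for the largest eigenvalue `λ_{N-1}` and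
`∑_{i : u(i) ≠ 0} d_i ≤ ∑_{i : u(i) = 0} d_i`, then `λ_{N-1} ≤ 1 + √(1 - h²)`. -/
theorem largest_eigenvalue_le_of_localized_eigenfunction
    (w : V → V → ℝ)
    (hsym : ∀ i j, w i j = w j i) (hnn : ∀ i j, 0 ≤ w i j)
    (hdeg : ∀ i, 0 < deg w i) (hconn : Conn w) (hN : 2 ≤ Fintype.card V)
    (lam : ℝ) (u : V → ℝ) (hu : u ≠ 0) (heig : ∀ i, lap w u i = lam * u i)
    (hmax : ∀ μ, IsEigen w μ → μ ≤ lam)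
    (hloc : ∑ i ∈ Finset.univ.filter (fun i => u i ≠ 0), deg w i ≤
            ∑ i ∈ Finset.univ.filter (fun i => u i = 0), deg w i) :
    lam ≤ 1 + Real.sqrt (1 - cheeger w ^ 2) := by
  linarith [(abs_le.1 (largest_eigenvalue_le_of_localized_eigenfunction_general
    hsym hnn hdeg hu heig hloc)).2]

end BJ
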